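/- Let u ∈ W and γ ∈ R^+ satisfy ℓ(us_γ) = ℓ(u) + 1 − ⟨2ρ, γ^∨⟩. Then for every 1 ≤ i ≤ n with ⟨χ_i, γ^∨⟩ ≠ 0, one has gr(γ^∨) + gr(us_γ) ≤ gr(u) + gr(s_i) in the lexicographic order on Z², where gr(s_1) = (1,0) and gr(s_i) = (0,1) for i ≠ 1. -/

import Mathlib

/-!
The two components of each side add up to the same number, because the length hypothesis says
`⟨2ρ, γ^∨⟩ + ℓ(u s_γ) = ℓ(u) + 1`.  Hence only the first components matter, and the claim becomes
`⟨α_1, γ^∨⟩ + [u s_γ α_1 < 0] ≤ [u α_1 < 0] + [i = 1]`.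

Lengths are counted by inversions (`len_eq`, proved with the exchange property `exchange`).  The
sum `⟨2ρ, γ^∨⟩` collapses to the inversions `β` of `s_γ`, where `⟨β, γ^∨⟩ ≥ 1`, with value `2` at
`β = γ`; so `ℓ(s_γ) + 1 ≤ ⟨2ρ, γ^∨⟩`.  Since also `ℓ(u) ≤ ℓ(u s_γ) + ℓ(s_γ)`, the hypothesis
forces equality in both estimates (`rigidity`): every inversion of `s_γ` is an inversion of `u`,
and `⟨β, γ^∨⟩ = 1` for every inversion `β ≠ γ` of `s_γ`.  The inequality is then checked directly:
for `γ = α_1` only `i = 1` occurs; if `γ ≠ α_1` and `⟨α_1, γ^∨⟩ > 0`, both `α_1` and `γ - α_1` are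
inversions of `s_γ`; the remaining cases are trivial.
-/

open scoped BigOperators

/-- A reduced crystallographic root system with a fixed base `α_1, …, α_n` of simple
roots, bundled with its Weyl group `W`.  A root `γ` is recorded by its integer
coordinate vector in the basis of simple roots (so the `i`-th simple root is
`Pi.single i 1`), and `cor γ` is the coordinate vector of the coroot `γ^∨` in the
basis of simple coroots (hence `cor γ i = ⟨χ_i, γ^∨⟩` for the fundamental weights
`χ_i`).  `A i j = ⟨α_i, α_j^∨⟩` is the Cartan matrix, `σ γ` is the reflection `s_γ`
and `act` is the action of the Weyl group on the root lattice. -/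
structure RootSystemData (n : ℕ) where
  A : Fin n → Fin n → ℤ
  R : Finset (Fin n → ℤ)
  cor : (Fin n → ℤ) → (Fin n → ℤ)
  W : Type
  [grp : Group W]
  σ : (Fin n → ℤ) → W
  act : W → (Fin n → ℤ) → (Fin n → ℤ)
  simple_mem : ∀ i : Fin n, (Pi.single i 1 : Fin n → ℤ) ∈ R
  root_ne_zero : ∀ γ ∈ R, γ ≠ 0
  neg_mem : ∀ γ ∈ R, -γ ∈ R
  pos_or_neg : ∀ γ ∈ R, (∀ i, 0 ≤ γ i) ∨ (∀ i, γ i ≤ 0)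
  reduced : ∀ γ ∈ R, ∀ k : ℤ, k • γ ∈ R → k = 1 ∨ k = -1
  cor_simple : ∀ i : Fin n, cor (Pi.single i 1) = Pi.single i 1
  cor_neg : ∀ γ ∈ R, cor (-γ) = -(cor γ)
  pair_self : ∀ γ ∈ R, (∑ i, ∑ j, γ i * A i j * cor γ j) = 2
  act_one : ∀ x, act 1 x = x
  act_mul : ∀ w w' x, act (w * w') x = act w (act w' x)
  act_refl : ∀ γ ∈ R, ∀ x, act (σ γ) x = x - (∑ i, ∑ j, x i * A i j * cor γ j) • γ
  act_mem : ∀ (w : W), ∀ γ ∈ R, act w γ ∈ R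
  cor_refl : ∀ γ ∈ R, ∀ β ∈ R,
    cor (act (σ γ) β) = cor β - (∑ i, ∑ j, γ i * A i j * cor β j) • cor γ
  refl_sq : ∀ γ ∈ R, σ γ * σ γ = 1
  refl_act : ∀ (w : W), ∀ γ ∈ R, σ (act w γ) = w * σ γ * w⁻¹
  act_faithful : ∀ w w' : W, (∀ γ ∈ R, act w γ = act w' γ) → w = w'
  generated : ∀ w : W, ∃ l : List (Fin n), w = (l.map fun i => σ (Pi.single i 1)).prod

namespace RootSystemData

instance {n : ℕ} (c : RootSystemData n) : Group c.W := c.grp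

/-- the pairing `⟨x, λ⟩` between an element `x` of the root lattice (coordinates in
the basis of simple roots) and an element `λ` of the coroot lattice (coordinates in
the basis of simple coroots) -/
def pair {n : ℕ} (c : RootSystemData n) (x lam : Fin n → ℤ) : ℤ :=
  ∑ i, ∑ j, x i * c.A i j * lam j

/-- the `i`-th simple root -/
def sroot {n : ℕ} (_c : RootSystemData n) (i : Fin n) : Fin n → ℤ := Pi.single i 1

/-- the simple reflection `s_i` -/
def s {n : ℕ} (c : RootSystemData n) (i : Fin n) : c.W := c.σ (c.sroot i)

/-- `s_{α_{t+1}}` for a `0`-based natural number index `t` (`= 1` when out of range) -/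
def sN {n : ℕ} (c : RootSystemData n) (t : ℕ) : c.W := if h : t < n then c.s ⟨t, h⟩ else 1

/-- `⟨2ρ, λ⟩ = Σ_{β ∈ R^+} ⟨β, λ⟩`, where `ρ` is the half-sum of the positive roots -/
def pairTwoRho {n : ℕ} (c : RootSystemData n) (lam : Fin n → ℤ) : ℤ :=
  ∑ β ∈ c.R, if ∀ i, 0 ≤ β i then c.pair β lam else 0

/-- the length of `w ∈ W` with respect to the simple reflections -/
noncomputable def len {n : ℕ} (c : RootSystemData n) (w : c.W) : ℕ :=
  sInf {k | ∃ l : List (Fin n), l.length = k ∧ (l.map c.s).prod = w}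

/-- the parabolic subgroup `W_S` generated by the simple reflections indexed by `S` -/
def Wsub {n : ℕ} (c : RootSystemData n) (S : Finset (Fin n)) : Subgroup c.W :=
  Subgroup.closure (c.s '' ↑S)

/-- `w ∈ W_T^S`: `w ∈ W_T` and `w` has minimal length in the coset `w W_S` -/
def MinRep {n : ℕ} (c : RootSystemData n) (T S : Finset (Fin n)) (w : c.W) : Prop :=
  w ∈ c.Wsub T ∧ ∀ u ∈ c.Wsub S, c.len w ≤ c.len (w * u)

/-- `w` is the longest element of `W_S` -/
def IsLongest {n : ℕ} (c : RootSystemData n) (S : Finset (Fin n)) (w : c.W) : Prop :=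
  w ∈ c.Wsub S ∧ ∀ v ∈ c.Wsub S, c.len v ≤ c.len w

end RootSystemData

/-- the support of `γ` is contained in `S`, i.e. `γ` lies in the span of
`{α_i : i ∈ S}` (for a root `γ`, membership in `R_S`) -/
def suppIn {n : ℕ} (S : Finset (Fin n)) (γ : Fin n → ℤ) : Prop :=
  ∀ i, i ∉ S → γ i = 0

/-- `Δ_j` for `0 ≤ j ≤ r+1`: the index set of the first `j` simple roots for `j ≤ r`,
and all of `Δ` for `j = r+1`.  (Indices of simple roots are `0`-based, so
`α_1, …, α_j` correspond to the indices `0, …, j-1`.) -/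
def deltaSet (n r j : ℕ) : Finset (Fin n) :=
  if j = r + 1 then Finset.univ else Finset.univ.filter fun i => (i : ℕ) < j

namespace RootSystemData

/-- `v 0, …, v r` (standing for `v_1, …, v_{r+1}`) is the decomposition of `w`
associated to `(Δ_P, Υ)`:  each `v_i ∈ W_{Δ_i}^{Δ_{i-1}}` and `w = v_{r+1} v_r ⋯ v_1`. -/
def IsDecomp {n : ℕ} (c : RootSystemData n) (r : ℕ) (w : c.W)
    (v : Fin (r + 1) → c.W) : Prop :=
  (∀ k : Fin (r + 1), c.MinRep (deltaSet n r ((k : ℕ) + 1)) (deltaSet n r (k : ℕ)) (v k)) ∧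
    w = (List.ofFn v).reverse.prod

/-- the first `m` simple roots `α_1, …, α_m` form a path of type `A_m`:
`⟨α_i, α_j^∨⟩ = -1` if `|i-j| = 1` and `⟨α_i, α_j^∨⟩ = 0` if `|i-j| ≥ 2`. -/
def PathA {n : ℕ} (c : RootSystemData n) (m : ℕ) : Prop :=
  ∀ i j : Fin n, (i : ℕ) < m → (j : ℕ) < m →
    (((i : ℕ) + 1 = (j : ℕ) ∨ (j : ℕ) + 1 = (i : ℕ)) → c.A i j = -1) ∧
    ((i : ℕ) + 2 ≤ (j : ℕ) ∨ (j : ℕ) + 2 ≤ (i : ℕ) → c.A i j = 0)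

/-- `u_{[k,m]} = s_k s_{k+1} ⋯ s_m` (`1`-based indices; `u_{[k,m]} = 1` for `k > m`) -/
def uu {n : ℕ} (c : RootSystemData n) (k m : ℕ) : c.W :=
  ((List.range' k (m + 1 - k)).map fun t => c.sN (t - 1)).prod

/-- `u_i^{(m)} = s_{m-i+1} s_{m-i+2} ⋯ s_m` -/
def uElt {n : ℕ} (c : RootSystemData n) (i m : ℕ) : c.W := c.uu (m - i + 1) m

end RootSystemData

/-- strict lexicographic order on `Fin m → ℤ` -/
def lexLT {m : ℕ} (x y : Fin m → ℤ) : Prop :=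
  ∃ j, x j < y j ∧ ∀ k, k < j → x k = y k

/-- lexicographic order on `Fin m → ℤ` -/
def lexLE {m : ℕ} (x y : Fin m → ℤ) : Prop := x = y ∨ lexLT x y

/-- the grading `gr(q_{α_{j+1}^∨}) ∈ ℤ^{r+1}` (for the `0`-based index `j < r`), when
`Δ_P` is of type `A_r`: in `1`-based terms, `gr(q_{α_1^∨}) = 2·e_1` and
`gr(q_{α_j^∨}) = (1-j)·e_{j-1} + (1+j)·e_j` for `2 ≤ j ≤ r`. -/
def grQ (r j : ℕ) : Fin (r + 1) → ℤ := fun k =>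
  (if (k : ℕ) = j then (j : ℤ) + 2 else 0) + (if (k : ℕ) + 1 = j then -(j : ℤ) else 0)

/-- the grading `gr(q_λ)` for `λ ∈ Q_P^∨` (coordinates in simple coroots), extended
additively from the `gr(q_{α_j^∨})`, when `Δ_P` is of type `A_r` -/
def grQlam (n r : ℕ) (lam : Fin n → ℤ) : Fin (r + 1) → ℤ :=
  fun k => ∑ j, lam j * grQ r (j : ℕ) k

namespace RootSystemData

variable {n : ℕ} (c : RootSystemData n)

lemma act_refl' {γ : Fin n → ℤ} (h : γ ∈ c.R) (x : Fin n → ℤ) :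
    c.act (c.σ γ) x = x - c.pair x (c.cor γ) • γ := c.act_refl γ h x

lemma pair_self' {γ : Fin n → ℤ} (h : γ ∈ c.R) : c.pair γ (c.cor γ) = 2 := c.pair_self γ h

lemma pair_neg (x l : Fin n → ℤ) : c.pair (-x) l = -c.pair x l := by
  simp [pair, Finset.sum_neg_distrib]

lemma pair_sub (x y l : Fin n → ℤ) : c.pair (x - y) l = c.pair x l - c.pair y l := by
  simp [pair, sub_mul, Finset.sum_sub_distrib]

lemma pair_smul (k : ℤ) (x l : Fin n → ℤ) : c.pair (k • x) l = k * c.pair x l := by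
  simp [pair, Finset.mul_sum, mul_assoc]

lemma sroot_mem (i : Fin n) : c.sroot i ∈ c.R := c.simple_mem i

lemma act_s_neg (i : Fin n) (x : Fin n → ℤ) : c.act (c.s i) (-x) = -c.act (c.s i) x := by
  rw [s, c.act_refl' (c.sroot_mem i), c.act_refl' (c.sroot_mem i), pair_neg]
  module

lemma exists_word (w : c.W) : ∃ l : List (Fin n), (l.map c.s).prod = w := by
  obtain ⟨l, hl⟩ := c.generated w
  exact ⟨l, hl.symm⟩

lemma act_neg (w : c.W) (x : Fin n → ℤ) : c.act w (-x) = -c.act w x := by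
  obtain ⟨l, rfl⟩ := c.exists_word w
  induction l with
  | nil => simp [c.act_one]
  | cons i t ih => rw [List.map_cons, List.prod_cons, c.act_mul, c.act_mul, ih, act_s_neg]

/-- `β` is a positive root. -/
def Pos (β : Fin n → ℤ) : Prop := β ∈ c.R ∧ ∀ i, 0 ≤ β i

variable {c}

lemma Pos.not_neg {β : Fin n → ℤ} (h : c.Pos β) : ¬ c.Pos (-β) := by
  intro h'
  apply c.root_ne_zero β h.1
  funext i
  have h1 := h.2 i
  have h2 := h'.2 i
  simp only [Pi.neg_apply] at h2
  simp only [Pi.zero_apply]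
  omega

lemma pos_or_neg' {β : Fin n → ℤ} (h : β ∈ c.R) : c.Pos β ∨ c.Pos (-β) := by
  rcases c.pos_or_neg β h with h' | h'
  · exact Or.inl ⟨h, h'⟩
  · exact Or.inr ⟨c.neg_mem β h, fun i => by simpa using h' i⟩

lemma pos_of_coord {β : Fin n → ℤ} (h : β ∈ c.R) {j : Fin n} (hj : 0 < β j) : c.Pos β := by
  rcases pos_or_neg' h with h' | h'
  · exact h'
  · have := h'.2 j
    simp only [Pi.neg_apply] at this
    omega

lemma pos_sroot (i : Fin n) : c.Pos (c.sroot i) :=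
  pos_of_coord (c.sroot_mem i) (j := i) (by simp [sroot])

/-- Reducedness: `±α_i` are the only roots proportional to `α_i`. -/
lemma Pos.exists_other {β : Fin n → ℤ} (h : c.Pos β) {i : Fin n} (hne : β ≠ c.sroot i) :
    ∃ j, j ≠ i ∧ 0 < β j := by
  by_contra! hcon
  have hβ : β = β i • c.sroot i := by
    funext j
    by_cases hj : j = i
    · subst hj; simp [sroot]
    · have h1 := hcon j hj
      have h2 := h.2 j
      simp [sroot, hj]
      omega
  have h3 : β i • c.sroot i ∈ c.R := hβ ▸ h.1
  rcases c.reduced _ (c.sroot_mem i) _ h3 with hk | hk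
  · apply hne; rw [hβ, hk, one_smul]
  · have := h.2 i; omega

lemma Pos.act_s {β : Fin n → ℤ} (h : c.Pos β) {i : Fin n} (hne : β ≠ c.sroot i) :
    c.Pos (c.act (c.s i) β) := by
  obtain ⟨j, hji, hj⟩ := h.exists_other hne
  refine pos_of_coord (j := j) (c.act_mem _ _ h.1) ?_
  rw [s, c.act_refl' (c.sroot_mem i)]
  simpa [sroot, hji] using hj

lemma act_refl_self {γ : Fin n → ℤ} (h : γ ∈ c.R) : c.act (c.σ γ) γ = -γ := by
  rw [c.act_refl' h, c.pair_self' h]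
  module

lemma act_refl_refl {γ : Fin n → ℤ} (h : γ ∈ c.R) (x : Fin n → ℤ) :
    c.act (c.σ γ) (c.act (c.σ γ) x) = x := by
  rw [← c.act_mul, c.refl_sq γ h, c.act_one]

lemma act_s_self (i : Fin n) : c.act (c.s i) (c.sroot i) = -c.sroot i :=
  act_refl_self (c.sroot_mem i)

lemma act_s_s (i : Fin n) (x : Fin n → ℤ) : c.act (c.s i) (c.act (c.s i) x) = x :=
  act_refl_refl (c.sroot_mem i) x

lemma s_mul_s (i : Fin n) : c.s i * c.s i = 1 := c.refl_sq _ (c.sroot_mem i)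

lemma act_injective (w : c.W) : Function.Injective (c.act w) := by
  intro x y h
  have := congrArg (c.act w⁻¹) h
  simpa [← c.act_mul, c.act_one] using this

lemma act_pos_or (w : c.W) {β : Fin n → ℤ} (h : β ∈ c.R) :
    c.Pos (c.act w β) ∨ c.Pos (-c.act w β) := pos_or_neg' (c.act_mem w β h)

variable (c)

open Classical in
/-- The inversions of `w`: the positive roots that `w` makes negative. -/
noncomputable def Inv (w : c.W) : Finset (Fin n → ℤ) :=
  c.R.filter fun β => c.Pos β ∧ c.Pos (-c.act w β)

variable {c}

lemma mem_Inv {w : c.W} {β : Fin n → ℤ} : β ∈ c.Inv w ↔ c.Pos β ∧ c.Pos (-c.act w β) := by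
  simp only [Inv, Finset.mem_filter, and_iff_right_iff_imp]
  exact fun h => h.1.1

open Classical in
lemma card_Inv_mul_s (w : c.W) (i : Fin n) (h : c.Pos (c.act w (c.sroot i))) :
    (c.Inv (w * c.s i)).card = (c.Inv w).card + 1 := by
  have key : c.Inv (w * c.s i) = insert (c.sroot i) ((c.Inv w).image (c.act (c.s i))) := by
    ext β
    simp only [Finset.mem_insert, Finset.mem_image, mem_Inv, c.act_mul]
    constructor
    · rintro ⟨h1, h2⟩
      by_cases hb : β = c.sroot i
      · exact Or.inl hb
      · exact Or.inr ⟨c.act (c.s i) β, ⟨h1.act_s hb, h2⟩, act_s_s i β⟩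
    · rintro (rfl | ⟨β', ⟨h1, h2⟩, rfl⟩)
      · refine ⟨pos_sroot i, ?_⟩
        rwa [act_s_self, act_neg, neg_neg]
      · rw [act_s_s]
        refine ⟨h1.act_s ?_, h2⟩
        rintro rfl
        exact h.not_neg h2
  rw [key, Finset.card_insert_of_notMem, Finset.card_image_of_injective _ (act_injective _)]
  simp only [Finset.mem_image, mem_Inv, not_exists, not_and]
  rintro β ⟨h1, -⟩ h2
  have h3 : β = -c.sroot i := by rw [← act_s_s i β, h2, act_s_self]
  exact (pos_sroot i).not_neg (h3 ▸ h1)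

lemma act_mul_s_sroot (w : c.W) (i : Fin n) :
    c.act (w * c.s i) (c.sroot i) = -c.act w (c.sroot i) := by
  rw [c.act_mul, act_s_self, act_neg]

lemma card_Inv_mul_s' (w : c.W) (i : Fin n) (h : c.Pos (-c.act w (c.sroot i))) :
    (c.Inv w).card = (c.Inv (w * c.s i)).card + 1 := by
  rw [← card_Inv_mul_s (w * c.s i) i (by rwa [act_mul_s_sroot]), mul_assoc, s_mul_s, mul_one]

lemma Inv_one : c.Inv 1 = ∅ := by
  ext β
  simp only [mem_Inv, c.act_one, Finset.notMem_empty, iff_false, not_and]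
  exact fun h => h.not_neg

/-- The exchange property: if the product of a word makes `α_i` negative, multiplying by `s_i`
on the right amounts to deleting one letter. -/
lemma exchange (i : Fin n) (l : List (Fin n))
    (h : c.Pos (-c.act (l.map c.s).prod (c.sroot i))) :
    ∃ l' : List (Fin n), l'.length + 1 = l.length ∧
      (l'.map c.s).prod = (l.map c.s).prod * c.s i := by
  induction l with
  | nil =>
    simp only [List.map_nil, List.prod_nil, c.act_one] at h
    exact absurd h (pos_sroot i).not_neg
  | cons j t ih =>
    rcases act_pos_or (t.map c.s).prod (c.sroot_mem i) with hp | hp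
    · -- the letter `j` is the one that changes the sign, so the root it meets is `α_j`
      have hr : c.act (t.map c.s).prod (c.sroot i) = c.sroot j := by
        by_contra hne
        rw [List.map_cons, List.prod_cons, c.act_mul] at h
        exact (hp.act_s hne).not_neg h
      have hs : c.s j = (t.map c.s).prod * c.s i * (t.map c.s).prod⁻¹ := by
        rw [s, ← hr, c.refl_act _ _ (c.sroot_mem i), ← s]
      refine ⟨t, by simp, ?_⟩
      rw [List.map_cons, List.prod_cons, hs]
      simp [mul_assoc, s_mul_s]
    · obtain ⟨l', h1, h2⟩ := ih hp
      exact ⟨j :: l', by simp [h1], by simp [h2, mul_assoc]⟩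

lemma card_Inv_le_length (l : List (Fin n)) : (c.Inv (l.map c.s).prod).card ≤ l.length := by
  induction l using List.reverseRecOn with
  | nil => simp [Inv_one]
  | append_singleton l i ih =>
    simp only [List.map_append, List.map_cons, List.map_nil, List.prod_append, List.prod_cons,
      List.prod_nil, mul_one, List.length_append, List.length_cons, List.length_nil]
    rcases act_pos_or (l.map c.s).prod (c.sroot_mem i) with h | h
    · have := card_Inv_mul_s _ i h; omega
    · have := card_Inv_mul_s' _ i h; omega

lemma exists_word_card (l : List (Fin n)) : ∃ l' : List (Fin n),
    l'.length = (c.Inv (l.map c.s).prod).card ∧ (l'.map c.s).prod = (l.map c.s).prod := by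
  induction l using List.reverseRecOn with
  | nil => exact ⟨[], by simp [Inv_one]⟩
  | append_singleton l i ih =>
    obtain ⟨l', h1, h2⟩ := ih
    simp only [List.map_append, List.map_cons, List.map_nil, List.prod_append, List.prod_cons,
      List.prod_nil, mul_one]
    rcases act_pos_or (l.map c.s).prod (c.sroot_mem i) with h | h
    · have := card_Inv_mul_s _ i h
      exact ⟨l' ++ [i], by simp; omega, by simp [h2]⟩
    · have := card_Inv_mul_s' _ i h
      rw [← h2] at h
      obtain ⟨l'', h3, h4⟩ := exchange i l' h
      exact ⟨l'', by omega, by rw [h4, h2]⟩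

/-- The length of `w` is its number of inversions. -/
lemma len_eq (w : c.W) : c.len w = (c.Inv w).card := by
  obtain ⟨l, rfl⟩ := c.exists_word w
  obtain ⟨l', h1, h2⟩ := exists_word_card l
  apply le_antisymm
  · exact Nat.sInf_le ⟨l', h1, h2⟩
  · refine le_csInf ⟨_, l', h1, h2⟩ ?_
    rintro k ⟨m, rfl, hm⟩
    rw [← hm]
    exact card_Inv_le_length m

lemma pair_pos_of_mem_Inv {γ β : Fin n → ℤ} (hγ : c.Pos γ) (h : β ∈ c.Inv (c.σ γ)) :
    0 < c.pair β (c.cor γ) := by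
  obtain ⟨h1, h2⟩ := mem_Inv.1 h
  by_contra! hle
  rw [c.act_refl' hγ.1] at h2
  refine Pos.not_neg (c := c) (β := β - c.pair β (c.cor γ) • γ) ⟨?_, fun i => ?_⟩ h2
  · rw [← c.act_refl' hγ.1]; exact c.act_mem _ _ h1.1
  · have := h1.2 i
    have := hγ.2 i
    simp only [Pi.sub_apply, Pi.smul_apply, smul_eq_mul]
    nlinarith

lemma pair_act_refl {γ : Fin n → ℤ} (h : γ ∈ c.R) (x : Fin n → ℤ) :
    c.pair (c.act (c.σ γ) x) (c.cor γ) = -c.pair x (c.cor γ) := by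
  rw [c.act_refl' h, pair_sub, pair_smul, c.pair_self' h]
  ring

/-- Only the inversions of `s_γ` contribute to `⟨2ρ, γ^∨⟩`: on the remaining positive roots `s_γ`
is an involution changing the sign of `⟨·, γ^∨⟩`. -/
lemma pairTwoRho_eq {γ : Fin n → ℤ} (hγ : c.Pos γ) :
    c.pairTwoRho (c.cor γ) = ∑ β ∈ c.Inv (c.σ γ), c.pair β (c.cor γ) := by
  classical
  have h0 : c.pairTwoRho (c.cor γ) = ∑ β ∈ c.R.filter c.Pos, c.pair β (c.cor γ) := by
    rw [pairTwoRho, Finset.sum_filter]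
    refine Finset.sum_congr rfl fun β hβ => ?_
    simp [Pos, hβ]
  have h1 : c.Inv (c.σ γ) = (c.R.filter c.Pos).filter fun β => c.Pos (-c.act (c.σ γ) β) := by
    rw [Inv, Finset.filter_filter]
  rw [h0, h1, ← Finset.sum_filter_add_sum_filter_not (c.R.filter c.Pos)
    (fun β => c.Pos (-c.act (c.σ γ) β)), add_eq_left]
  have hmem : ∀ β, β ∈ (c.R.filter c.Pos).filter (fun β => ¬ c.Pos (-c.act (c.σ γ) β)) ↔
      c.Pos β ∧ c.Pos (c.act (c.σ γ) β) := by
    intro β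
    simp only [Finset.mem_filter]
    constructor
    · rintro ⟨⟨h, h'⟩, h2⟩
      exact ⟨h', (act_pos_or _ h).resolve_right h2⟩
    · rintro ⟨h, h'⟩
      exact ⟨⟨h.1, h⟩, h'.not_neg⟩
  refine Finset.sum_involution (fun β _ => c.act (c.σ γ) β) ?_ ?_ ?_ ?_
  · intro β _
    rw [pair_act_refl hγ.1, add_neg_cancel]
  · intro β _ hne heq
    have := pair_act_refl hγ.1 β
    rw [heq] at this
    omega
  · intro β hβ
    rw [hmem] at hβ ⊢
    rw [act_refl_refl hγ.1]
    exact hβ.symm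
  · intro β _
    exact act_refl_refl hγ.1 β

lemma self_mem_Inv {γ : Fin n → ℤ} (hγ : c.Pos γ) : γ ∈ c.Inv (c.σ γ) := by
  rw [mem_Inv, act_refl_self hγ.1, neg_neg]
  exact ⟨hγ, hγ⟩

open Classical in
/-- Subadditivity of the length for `u = (u s_γ) s_γ`, with the inversions lost in cancellation
left out of the count. -/
lemma card_Inv_le (u : c.W) {γ : Fin n → ℤ} (hγ : c.Pos γ) :
    (c.Inv u).card ≤ (c.Inv (u * c.σ γ)).card + (c.Inv (c.σ γ) ∩ c.Inv u).card := by
  have hsub : c.Inv u ⊆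
      (c.Inv (u * c.σ γ)).image (c.act (c.σ γ)) ∪ (c.Inv (c.σ γ) ∩ c.Inv u) := by
    intro β hβ
    obtain ⟨h1, h2⟩ := mem_Inv.1 hβ
    rw [Finset.mem_union, Finset.mem_inter]
    rcases act_pos_or (c.σ γ) h1.1 with h | h
    · refine Or.inl (Finset.mem_image.2 ⟨c.act (c.σ γ) β, mem_Inv.2 ⟨h, ?_⟩,
        act_refl_refl hγ.1 β⟩)
      rwa [c.act_mul, act_refl_refl hγ.1]
    · exact Or.inr ⟨mem_Inv.2 ⟨h1, h⟩, hβ⟩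
  calc (c.Inv u).card ≤ _ := Finset.card_le_card hsub
    _ ≤ ((c.Inv (u * c.σ γ)).image (c.act (c.σ γ))).card + (c.Inv (c.σ γ) ∩ c.Inv u).card :=
      Finset.card_union_le _ _
    _ ≤ _ := Nat.add_le_add_right Finset.card_image_le _

/-- The length hypothesis is an extremal case of two inequalities, and equality in them determines
how the inversions of `s_γ` sit relative to `u` and to `γ^∨`. -/
lemma rigidity (u : c.W) {γ : Fin n → ℤ} (hγ : c.Pos γ)
    (hlen : (c.len (u * c.σ γ) : ℤ) = (c.len u : ℤ) + 1 - c.pairTwoRho (c.cor γ)) :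
    c.Inv (c.σ γ) ⊆ c.Inv u ∧
      ∀ β ∈ c.Inv (c.σ γ), β ≠ γ → c.pair β (c.cor γ) = 1 := by
  classical
  have hle := card_Inv_le u hγ
  have hint : (c.Inv (c.σ γ) ∩ c.Inv u).card ≤ (c.Inv (c.σ γ)).card :=
    Finset.card_le_card Finset.inter_subset_left
  have hself := self_mem_Inv hγ
  have hcard : ((c.Inv (c.σ γ)).card : ℤ) = ((c.Inv (c.σ γ)).erase γ).card + 1 := by
    have := Finset.card_erase_add_one hself
    omega
  have hrho : c.pairTwoRho (c.cor γ) =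
      (∑ β ∈ (c.Inv (c.σ γ)).erase γ, (c.pair β (c.cor γ) - 1)) + (c.Inv (c.σ γ)).card + 1 := by
    rw [pairTwoRho_eq hγ, ← Finset.sum_erase_add _ _ hself, c.pair_self' hγ.1,
      Finset.sum_sub_distrib, hcard]
    simp
    ring
  have hnn : ∀ β ∈ (c.Inv (c.σ γ)).erase γ, 0 ≤ c.pair β (c.cor γ) - 1 := by
    intro β hβ
    have := pair_pos_of_mem_Inv hγ (Finset.mem_of_mem_erase hβ)
    omega
  have hsum := Finset.sum_nonneg hnn
  rw [len_eq, len_eq, hrho] at hlen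
  have hz : ∑ β ∈ (c.Inv (c.σ γ)).erase γ, (c.pair β (c.cor γ) - 1) = 0 := by omega
  constructor
  · rw [← Finset.inter_eq_left]
    exact Finset.eq_of_subset_of_card_le Finset.inter_subset_left (by omega)
  · intro β hβ hne
    have := (Finset.sum_eq_zero_iff_of_nonneg hnn).1 hz β (Finset.mem_erase.2 ⟨hne, hβ⟩)
    omega

/-- The decomposition `w = v_2 v_1` for `Δ_P = {α_1}`: lengths add, and `ℓ(v_1)` records whether
`w` makes `α_1` negative. -/
lemma decomp_spec {hn : 0 < n} {w : c.W} {v : Fin 2 → c.W} (h : c.IsDecomp 1 w v) :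
    c.len w = c.len (v 0) + c.len (v 1) ∧
      ((c.Pos (c.act w (c.sroot ⟨0, hn⟩)) ∧ c.len (v 0) = 0) ∨
        (c.Pos (-c.act w (c.sroot ⟨0, hn⟩)) ∧ c.len (v 0) = 1)) := by
  obtain ⟨h1, h2⟩ := h
  have hS : c.Wsub (deltaSet n 1 1) = Subgroup.zpowers (c.s ⟨0, hn⟩) := by
    have : c.s '' (↑(deltaSet n 1 1) : Set (Fin n)) = {c.s ⟨0, hn⟩} := by
      ext x
      simp only [deltaSet, Set.mem_image, Set.mem_singleton_iff]
      constructor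
      · rintro ⟨i, hi, rfl⟩
        congr 1
        ext
        simpa using hi
      · rintro rfl
        exact ⟨⟨0, hn⟩, by simp, rfl⟩
    rw [Wsub, this, Subgroup.zpowers_eq_closure]
  have hw : w = v 1 * v 0 := by simpa using h2
  have hlast : c.Pos (c.act (v 1) (c.sroot ⟨0, hn⟩)) := by
    refine (act_pos_or _ (c.sroot_mem _)).resolve_right fun hneg => ?_
    have hmin := (h1 1).2 (c.s ⟨0, hn⟩) (by
      simp only [Fin.val_one]
      rw [hS]; exact Subgroup.mem_zpowers _)
    rw [len_eq, len_eq] at hmin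
    have := card_Inv_mul_s' _ _ hneg
    omega
  have hone : c.len (1 : c.W) = 0 := by rw [len_eq, Inv_one, Finset.card_empty]
  have hv0 : v 0 = 1 ∨ v 0 = c.s ⟨0, hn⟩ := by
    have hmem := (h1 0).1
    simp only [Fin.val_zero, zero_add] at hmem
    rw [hS] at hmem
    obtain ⟨k, hk⟩ := Subgroup.mem_zpowers_iff.1 hmem
    have hsq : (c.s ⟨0, hn⟩) ^ (2 : ℤ) = 1 := by rw [zpow_two, s_mul_s]
    rcases Int.even_or_odd' k with ⟨m, rfl | rfl⟩
    · left; rw [← hk, zpow_mul, hsq, one_zpow]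
    · right; rw [← hk, zpow_add, zpow_mul, hsq, one_zpow, one_mul, zpow_one]
  rcases hv0 with h0 | h0
  · rw [h0, mul_one] at hw
    rw [hw, h0, hone]
    exact ⟨by omega, Or.inl ⟨hlast, rfl⟩⟩
  · have hs1 : c.len (c.s ⟨0, hn⟩) = 1 := by
      have := card_Inv_mul_s (1 : c.W) ⟨0, hn⟩ (by rw [c.act_one]; exact pos_sroot _)
      rwa [one_mul, Inv_one, Finset.card_empty, zero_add, ← len_eq] at this
    rw [h0] at hw
    rw [hw, h0, hs1, len_eq, len_eq, card_Inv_mul_s _ _ hlast, act_mul_s_sroot, neg_neg]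
    exact ⟨by omega, Or.inr ⟨hlast, rfl⟩⟩

end RootSystemData

/-- **Key Lemma, part (b), for `Δ_P = {α_1}` (`r = 1`).**  Let `u ∈ W` and
`γ ∈ R^+` satisfy `ℓ(u s_γ) = ℓ(u) + 1 - ⟨2ρ, γ^∨⟩`.  Then for every `i` with
`⟨χ_i, γ^∨⟩ ≠ 0`, `gr(γ^∨) + gr(u s_γ) ≤ gr(u) + gr(s_i)` in the lexicographic
order on `ℤ²`, where `gr(λ) = (⟨α_1, λ⟩, ⟨2ρ - α_1, λ⟩)`, `gr(s_1) = (1,0)` and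
`gr(s_i) = (0,1)` for `i ≠ 1`. -/
theorem key_lemma_b_rank_one {n : ℕ} (c : RootSystemData n) (hn : 1 < n)
    (u : c.W) (γ : Fin n → ℤ) (hγR : γ ∈ c.R) (hγpos : ∀ i, 0 ≤ γ i)
    (hlen : (c.len (u * c.σ γ) : ℤ) = (c.len u : ℤ) + 1 - c.pairTwoRho (c.cor γ))
    (i : Fin n) (hi : c.cor γ i ≠ 0)
    (v v' : Fin 2 → c.W)
    (hv : c.IsDecomp 1 u v) (hv' : c.IsDecomp 1 (u * c.σ γ) v') :
    lexLE
      (fun k : Fin 2 =>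
        (if (k : ℕ) = 0 then c.pair (c.sroot ⟨0, by omega⟩) (c.cor γ)
          else c.pairTwoRho (c.cor γ) - c.pair (c.sroot ⟨0, by omega⟩) (c.cor γ)) +
          (c.len (v' k) : ℤ))
      (fun k : Fin 2 =>
        (c.len (v k) : ℤ) +
          (if (i : ℕ) = 0 then (if (k : ℕ) = 0 then 1 else 0)
            else (if (k : ℕ) = 1 then 1 else 0))) := by
  have hγ : c.Pos γ := ⟨hγR, hγpos⟩
  obtain ⟨hsub, hpair⟩ := RootSystemData.rigidity u hγ hlen
  obtain ⟨hl, hd⟩ := RootSystemData.decomp_spec (hn := by omega) hv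
  obtain ⟨hl', hd'⟩ := RootSystemData.decomp_spec (hn := by omega) hv'
  set α := c.sroot (⟨0, by omega⟩ : Fin n) with hα
  -- the comparison of the first components
  have hfirst : c.pair α (c.cor γ) + (c.len (v' 0) : ℤ) ≤
      (c.len (v 0) : ℤ) + (if (i : ℕ) = 0 then 1 else 0) := by
    by_cases hγα : γ = α
    · have hi0 : (i : ℕ) = 0 := by
        by_contra hne
        apply hi
        rw [hγα, hα, RootSystemData.sroot, c.cor_simple]
        refine Pi.single_eq_of_ne ?_ _
        intro h
        exact hne (by simp [h])
      have hu := (RootSystemData.mem_Inv.1 (hsub (RootSystemData.self_mem_Inv hγ))).2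
      rw [hγα] at hu
      have hu' : c.Pos (c.act (u * c.σ γ) α) := by
        rwa [c.act_mul, hγα, RootSystemData.act_refl_self (c.sroot_mem _),
          RootSystemData.act_neg]
      have h2 : c.pair α (c.cor γ) = 2 := by rw [hγα]; exact c.pair_self' (c.sroot_mem _)
      rw [h2, if_pos hi0]
      have e1 : c.len (v 0) = 1 := (hd.resolve_left fun h => h.1.not_neg hu).2
      have e2 : c.len (v' 0) = 0 := (hd'.resolve_right fun h => hu'.not_neg h.1).2
      omega
    · have hif : (0 : ℤ) ≤ if (i : ℕ) = 0 then 1 else 0 := by split_ifs <;> omega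
      rcases lt_trichotomy (c.pair α (c.cor γ)) 0 with ha | ha | ha
      · have : c.len (v' 0) ≤ 1 := by rcases hd' with h | h <;> omega
        omega
      · have hact : c.act (u * c.σ γ) α = c.act u α := by
          rw [c.act_mul, c.act_refl' hγR, ha, zero_smul, sub_zero]
        rw [hact] at hd'
        rcases hd with h | h <;> rcases hd' with h' | h'
        · omega
        · exact absurd h'.1 h.1.not_neg
        · exact absurd h.1 h'.1.not_neg
        · omega
      · -- `γ` has a positive coefficient off `α_1`, so `s_γ α_1` is negative
        obtain ⟨j, hj, hjpos⟩ := hγ.exists_other hγα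
        have hneg : c.Pos (-c.act (c.σ γ) α) := by
          refine RootSystemData.pos_of_coord (j := j)
            (c.neg_mem _ (c.act_mem _ _ (c.sroot_mem _))) ?_
          rw [c.act_refl' hγR]
          have : α j = 0 := by rw [hα, RootSystemData.sroot]; exact Pi.single_eq_of_ne hj _
          simp only [Pi.neg_apply, Pi.sub_apply, Pi.smul_apply, this, smul_eq_mul, zero_sub,
            neg_neg]
          positivity
        have hmem : α ∈ c.Inv (c.σ γ) :=
          RootSystemData.mem_Inv.2 ⟨RootSystemData.pos_sroot _, hneg⟩
        have h1 := hpair α hmem (Ne.symm hγα)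
        have hu := (RootSystemData.mem_Inv.1 (hsub hmem)).2
        -- `-s_γ α_1 = γ - α_1` is an inversion of `s_γ` as well
        have hmem' : -c.act (c.σ γ) α ∈ c.Inv (c.σ γ) := by
          refine RootSystemData.mem_Inv.2 ⟨hneg, ?_⟩
          rw [RootSystemData.act_neg, RootSystemData.act_refl_refl hγR, neg_neg]
          exact RootSystemData.pos_sroot _
        have hu' := (RootSystemData.mem_Inv.1 (hsub hmem')).2
        rw [RootSystemData.act_neg, neg_neg, ← c.act_mul] at hu'
        have e1 : c.len (v 0) = 1 := (hd.resolve_left fun h => h.1.not_neg hu).2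
        have e2 : c.len (v' 0) = 0 := (hd'.resolve_right fun h => hu'.not_neg h.1).2
        omega
  -- both sides have the same total, so the first components decide
  rcases hfirst.lt_or_eq with hlt | heq
  · refine Or.inr ⟨0, ?_, fun k hk => absurd hk (Fin.not_lt_zero k)⟩
    simpa using hlt
  · left
    funext k
    fin_cases k
    · simpa using heq
    · simp only [Fin.mk_one, one_ne_zero, if_false, if_true]
      split_ifs at heq ⊢ <;> omega
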